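/- Fix a finite machine set M, a job set J over M, positive integers L and l with L ≥ D(J), and a function h : J → {0,…,L−1} that is (L,l)-good for J. Then in any greedy weak-scheduler execution up to time 2·L·l (with any adversary pushes and any choices of which eligible jobs the machines work on), at least half of the jobs are complete at time 2·L·l: |{ j ∈ J : pos_{2Ll}(j) = len(j) }| ≥ |J|/2. -/

import Mathlib

open Finset

/-- A greedy weak-scheduler execution up to time `tmax`, for the job set given by the
finite type `J` with machine sequences `seq : J → List M`, small time step count `l`, and
hash function `h : J → Fin L`. `pos t j` is the position of job `j` at time `t` and
`st t j ∈ {0,1}` its state (`1` = eliminated). At each step `t → t+1` an adversary first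
pushes jobs forward to positions `pos'`; with `T := ⌊t/l⌋` and
`Q m := { j : st t j = 0, pos' j < len j, seq(j)_{pos' j} = m, h j + pos' j = T }`:
if `t ≡ 0 (mod l)` and `|Q m| > l` every `j ∈ Q m` is dropped (`st (t+1) j = 1`);
if `0 < |Q m| ≤ l` machine `m` works on exactly one job of `Q m` (its position is
incremented from `pos'`); all other jobs keep their pushed positions, and all jobs not
dropped keep their states. -/
def IsGreedyExec {M J : Type*} [Fintype M] [DecidableEq M] [Fintype J]
    (seq : J → List M) {L : ℕ} (l : ℕ) (h : J → Fin L) (tmax : ℕ)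
    (pos : ℕ → J → ℕ) (st : ℕ → J → Fin 2) : Prop :=
  (∀ t ≤ tmax, ∀ j, pos t j ≤ (seq j).length) ∧
  (∀ j, st 0 j = 0) ∧
  (∀ t < tmax, ∃ pos' : J → ℕ,
    (∀ j, pos t j ≤ pos' j ∧ pos' j ≤ (seq j).length) ∧
    (let Q : M → Finset J := fun m =>
      Finset.univ.filter fun j =>
        st t j = 0 ∧ pos' j < (seq j).length ∧ (seq j)[pos' j]? = some m ∧
          (h j : ℕ) + pos' j = t / l
     ∃ worksel : M → Option J,
      (∀ m j, worksel m = some j → j ∈ Q m ∧ (Q m).card ≤ l) ∧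
      (∀ m, 0 < (Q m).card → (Q m).card ≤ l → (worksel m).isSome) ∧
      (∀ j, (∃ m, worksel m = some j) → pos (t + 1) j = pos' j + 1) ∧
      (∀ j, (¬ ∃ m, worksel m = some j) → pos (t + 1) j = pos' j) ∧
      (∀ j, (t % l = 0 ∧ ∃ m, l < (Q m).card ∧ j ∈ Q m) → st (t + 1) j = 1) ∧
      (∀ j, (¬ (t % l = 0 ∧ ∃ m, l < (Q m).card ∧ j ∈ Q m)) → st (t + 1) j = st t j)))

/-- The dilation of the job set: the maximum length of a job's machine sequence. -/
def dilation {M J : Type*} [Fintype J] (seq : J → List M) : ℕ :=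
  Finset.univ.sup fun j : J => (seq j).length

/-- A bad pattern for the job set given by the finite type `J` with machine sequences
`seq : J → List M`, with parameters `L` and `l`. -/
def IsBadPattern {M J : Type*} [Fintype M] [Fintype J] (seq : J → List M)
    (L l : ℕ) (B : Fin (2 * L) → M → Finset (J × ℕ)) : Prop :=
  (∀ T m, ∀ p ∈ B T m, (seq p.1)[p.2]? = some m) ∧
  (∀ T m T' m', ∀ p ∈ B T m, ∀ p' ∈ B T' m', p.1 = p'.1 → T = T' ∧ m = m' ∧ p = p') ∧
  (∀ T m, B T m = ∅ ∨ l < (B T m).card) ∧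
  Fintype.card J < 2 * ∑ T, ∑ m, (B T m).card

/-- The bad pattern `B` occurs for the hash function `h : J → {0,…,L−1}` if
`h(j) + i = T` for all `T`, `m` and `(j,i) ∈ B T m`. -/
def PatternOccurs {M J : Type*} [Fintype M] [Fintype J]
    {L : ℕ} (B : Fin (2 * L) → M → Finset (J × ℕ)) (h : J → Fin L) : Prop :=
  ∀ T m, ∀ p ∈ B T m, (h p.1 : ℕ) + p.2 = (T : ℕ)

/-- A hash function `h : J → {0,…,L−1}` is `(L,l)`-good for the job set `J` if no bad
pattern for `(J, L, l)` occurs for `h`. -/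
def IsGoodHash {M J : Type*} [Fintype M] [Fintype J] (seq : J → List M)
    (L l : ℕ) (h : J → Fin L) : Prop :=
  ∀ B : Fin (2 * L) → M → Finset (J × ℕ), IsBadPattern seq L l B → ¬ PatternOccurs B h

/-!
Cut time into large steps of `l` small steps. A job with hash `h j` that keeps up is at position
`T - h j` or beyond at the start of large step `T`. In large step `T` a machine sees at most `l`
jobs that sit exactly at `T - h j`, or else drops them all at once. As it finishes one of them per
small step, none is left when the large step ends, so the jobs that have not been dropped keep up.
Since `h j + len j ≤ 2L`, every job that is incomplete at time `2Ll` has been dropped. The recorded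
drops satisfy all clauses of a bad pattern that occurs for `h`, except possibly the last one;
goodness of `h` therefore says that at most half of the jobs were dropped.
-/

section Queue

variable {M J : Type*} {L : ℕ}

/-- At positions `p`, no incomplete job with state `0` is behind its due position for large
step `T`. -/
def OnTime (seq : J → List M) (h : J → Fin L) (p : J → ℕ) (s : J → Fin 2) (T : ℕ) : Prop :=
  ∀ j, s j = 0 → p j < (seq j).length → T ≤ h j + p j

variable [DecidableEq M] [Fintype J]

/-- The jobs with state `0` that, at positions `p`, are due on machine `m` in large step `T`. The
set `Q m` of `IsGreedyExec` is the case of the pushed positions. -/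
def queue (seq : J → List M) (h : J → Fin L) (p : J → ℕ) (s : J → Fin 2) (T : ℕ) (m : M) :
    Finset J :=
  univ.filter fun j => s j = 0 ∧ p j < (seq j).length ∧ (seq j)[p j]? = some m ∧ (h j : ℕ) + p j = T

variable {seq : J → List M} {h : J → Fin L} {p p' : J → ℕ} {s : J → Fin 2} {T : ℕ} {m : M} {j : J}

lemma mem_queue : j ∈ queue seq h p s T m ↔
    s j = 0 ∧ p j < (seq j).length ∧ (seq j)[p j]? = some m ∧ (h j : ℕ) + p j = T := by
  simp [queue]

lemma OnTime.queue_subset_of_le (hT : OnTime seq h p s T) (hp : ∀ j, p j ≤ p' j) :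
    queue seq h p' s T m ⊆ queue seq h p s T m := by
  intro j hj
  obtain ⟨hs, hlt, hm, hdue⟩ := mem_queue.1 hj
  have hle := hT j hs ((hp j).trans_lt hlt)
  have heq : p' j = p j := by have := hp j; omega
  exact mem_queue.2 ⟨hs, heq ▸ hlt, heq ▸ hm, heq ▸ hdue⟩

lemma OnTime.succ_of_queue_eq_empty (hT : OnTime seq h p s T)
    (hempty : ∀ m, queue seq h p s T m = ∅) : OnTime seq h p s (T + 1) := by
  intro j hs hlt
  refine (hT j hs hlt).lt_of_ne fun hdue => ?_
  have hj : j ∈ queue seq h p s T (seq j)[p j] :=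
    mem_queue.2 ⟨hs, hlt, List.getElem?_eq_getElem hlt, hdue.symm⟩
  simp [hempty] at hj

end Queue

section Step

variable {M J : Type*} [DecidableEq M] [Fintype J] {L : ℕ}

/-- Job `j` is dropped in the step from `t` to `t + 1` when the adversary pushes the jobs to the
positions `push t`. -/
def IsDropped (seq : J → List M) (l : ℕ) (h : J → Fin L) (st : ℕ → J → Fin 2) (push : ℕ → J → ℕ)
    (t : ℕ) (j : J) : Prop :=
  t % l = 0 ∧ ∃ m, l < (queue seq h (push t) (st t) (t / l) m).card ∧
    j ∈ queue seq h (push t) (st t) (t / l) m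

/-- The step from `t` to `t + 1` of a greedy execution in which the adversary pushes the jobs to
the positions `push t`. -/
structure IsGreedyStep (seq : J → List M) (l : ℕ) (h : J → Fin L) (pos : ℕ → J → ℕ)
    (st : ℕ → J → Fin 2) (push : ℕ → J → ℕ) (t : ℕ) : Prop where
  le_push : ∀ j, pos t j ≤ push t j
  exists_work : ∃ work : M → Option J,
    (∀ m j, work m = some j → j ∈ queue seq h (push t) (st t) (t / l) m) ∧
    (∀ m, 0 < (queue seq h (push t) (st t) (t / l) m).card →
      (queue seq h (push t) (st t) (t / l) m).card ≤ l → (work m).isSome) ∧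
    (∀ j, (∃ m, work m = some j) → pos (t + 1) j = push t j + 1) ∧
    (∀ j, (¬ ∃ m, work m = some j) → pos (t + 1) j = push t j)
  st_succ_of_isDropped : ∀ j, IsDropped seq l h st push t j → st (t + 1) j = 1
  st_succ_of_not_isDropped : ∀ j, ¬ IsDropped seq l h st push t j → st (t + 1) j = st t j

/-- The invariant of a greedy execution at time `t`: undropped jobs are on time for the current
large step, and once `t % l` of its small steps have passed, at most `l - t % l` jobs are still due
on each machine. At the start of a large step nothing bounds the number of due jobs. -/
structure OnSchedule (seq : J → List M) (l : ℕ) (h : J → Fin L) (pos : ℕ → J → ℕ)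
    (st : ℕ → J → Fin 2) (t : ℕ) : Prop where
  onTime : OnTime seq h (pos t) (st t) (t / l)
  card_queue_le : t % l ≠ 0 → ∀ m, (queue seq h (pos t) (st t) (t / l) m).card ≤ l - t % l

variable {seq : J → List M} {l : ℕ} {h : J → Fin L} {pos : ℕ → J → ℕ} {st : ℕ → J → Fin 2}
  {push : ℕ → J → ℕ} {t : ℕ} {m : M} {j : J}

lemma IsDropped.st_eq_zero (hj : IsDropped seq l h st push t j) : st t j = 0 := by
  obtain ⟨-, m, -, hm⟩ := hj
  exact (mem_queue.1 hm).1

namespace IsGreedyStep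

lemma push_le_pos_succ (hstep : IsGreedyStep seq l h pos st push t) (j : J) :
    push t j ≤ pos (t + 1) j := by
  obtain ⟨work, -, -, hworked, hidle⟩ := hstep.exists_work
  by_cases hj : ∃ m, work m = some j
  · exact (hworked j hj).symm ▸ Nat.le_succ _
  · exact (hidle j hj).ge

lemma not_isDropped_of_st_succ_eq_zero (hstep : IsGreedyStep seq l h pos st push t)
    (hj : st (t + 1) j = 0) : ¬ IsDropped seq l h st push t j :=
  fun hdrop => zero_ne_one (hj.symm.trans (hstep.st_succ_of_isDropped j hdrop))

lemma st_eq_zero_of_st_succ_eq_zero (hstep : IsGreedyStep seq l h pos st push t)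
    (hj : st (t + 1) j = 0) : st t j = 0 :=
  hstep.st_succ_of_not_isDropped j (hstep.not_isDropped_of_st_succ_eq_zero hj) ▸ hj

lemma onTime_succ {T : ℕ} (hstep : IsGreedyStep seq l h pos st push t)
    (hT : OnTime seq h (pos t) (st t) T) : OnTime seq h (pos (t + 1)) (st (t + 1)) T := by
  intro j hs hlt
  have hle := (hstep.le_push j).trans (hstep.push_le_pos_succ j)
  have := hT j (hstep.st_eq_zero_of_st_succ_eq_zero hs) (hle.trans_lt hlt)
  omega

lemma queue_succ_subset (hstep : IsGreedyStep seq l h pos st push t) :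
    queue seq h (pos (t + 1)) (st (t + 1)) (t / l) m ⊆
      queue seq h (push t) (st t) (t / l) m := by
  intro j hj
  obtain ⟨hs, hlt, hm, hdue⟩ := mem_queue.1 hj
  obtain ⟨work, hmem, -, hworked, hidle⟩ := hstep.exists_work
  have hnot : ¬ ∃ m', work m' = some j := by
    rintro ⟨m', hm'⟩
    have hpos := hworked j ⟨m', hm'⟩
    have hdue' := (mem_queue.1 (hmem m' j hm')).2.2.2
    omega
  have heq := hidle j hnot
  exact mem_queue.2
    ⟨hstep.st_eq_zero_of_st_succ_eq_zero hs, heq ▸ hlt, heq ▸ hm, heq ▸ hdue⟩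

lemma queue_succ_ssubset (hstep : IsGreedyStep seq l h pos st push t)
    (hpos : 0 < (queue seq h (push t) (st t) (t / l) m).card)
    (hle : (queue seq h (push t) (st t) (t / l) m).card ≤ l) :
    queue seq h (pos (t + 1)) (st (t + 1)) (t / l) m ⊂
      queue seq h (push t) (st t) (t / l) m := by
  obtain ⟨work, hmem, hsome, hworked, -⟩ := hstep.exists_work
  obtain ⟨j, hj⟩ := Option.isSome_iff_exists.1 (hsome m hpos hle)
  refine (ssubset_iff_of_subset hstep.queue_succ_subset).2 ⟨j, hmem m j hj, fun hj' => ?_⟩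
  have hbefore := (mem_queue.1 (hmem m j hj)).2.2.2
  have hafter := (mem_queue.1 hj').2.2.2
  have := hworked j ⟨m, hj⟩
  omega

lemma card_queue_succ_le_sub_one (hstep : IsGreedyStep seq l h pos st push t)
    (hle : (queue seq h (push t) (st t) (t / l) m).card ≤ l) :
    (queue seq h (pos (t + 1)) (st (t + 1)) (t / l) m).card ≤
      (queue seq h (push t) (st t) (t / l) m).card - 1 := by
  rcases Nat.eq_zero_or_pos (queue seq h (push t) (st t) (t / l) m).card with hzero | hpos
  · exact (card_le_card hstep.queue_succ_subset).trans (by omega)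
  · exact Nat.le_sub_one_of_lt (card_lt_card (hstep.queue_succ_ssubset hpos hle))

lemma queue_succ_eq_empty (hstep : IsGreedyStep seq l h pos st push t) (ht : t % l = 0)
    (hlt : l < (queue seq h (push t) (st t) (t / l) m).card) :
    queue seq h (pos (t + 1)) (st (t + 1)) (t / l) m = ∅ :=
  eq_empty_of_forall_notMem fun _ hj =>
    hstep.not_isDropped_of_st_succ_eq_zero (mem_queue.1 hj).1
      ⟨ht, m, hlt, hstep.queue_succ_subset hj⟩

lemma card_queue_succ_le (hstep : IsGreedyStep seq l h pos st push t)
    (hsched : OnSchedule seq l h pos st t) (m : M) :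
    (queue seq h (pos (t + 1)) (st (t + 1)) (t / l) m).card ≤ l - (t % l + 1) := by
  rcases eq_or_ne (t % l) 0 with hfirst | hlater
  · rcases le_or_gt (queue seq h (push t) (st t) (t / l) m).card l with hle | hlt
    · have := hstep.card_queue_succ_le_sub_one hle
      omega
    · simp [hstep.queue_succ_eq_empty hfirst hlt]
  · have hpushed : (queue seq h (push t) (st t) (t / l) m).card ≤ l - t % l :=
      (card_le_card (hsched.onTime.queue_subset_of_le hstep.le_push)).trans
        (hsched.card_queue_le hlater m)
    have := hstep.card_queue_succ_le_sub_one (hpushed.trans (Nat.sub_le _ _))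
    omega

lemma onSchedule_succ (hstep : IsGreedyStep seq l h pos st push t)
    (hsched : OnSchedule seq l h pos st t) : OnSchedule seq l h pos st (t + 1) := by
  have hcard := hstep.card_queue_succ_le hsched
  have honTime := hstep.onTime_succ hsched.onTime
  by_cases hdvd : l ∣ t + 1
  · have hlast : l ≤ t % l + 1 := Nat.le_of_dvd (Nat.succ_pos _)
      ((Nat.dvd_iff_mod_eq_zero ..).2 (by rw [Nat.mod_add_mod, Nat.mod_eq_zero_of_dvd hdvd]))
    have hempty : ∀ m, queue seq h (pos (t + 1)) (st (t + 1)) (t / l) m = ∅ := fun m =>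
      card_eq_zero.1 (by have := hcard m; omega)
    refine ⟨?_, fun hmod => absurd (Nat.mod_eq_zero_of_dvd hdvd) hmod⟩
    rw [Nat.succ_div_of_dvd hdvd]
    exact honTime.succ_of_queue_eq_empty hempty
  · have hdiv : (t + 1) / l = t / l := Nat.succ_div_of_not_dvd hdvd
    have hmod : (t + 1) % l = t % l + 1 := by
      have := Nat.div_add_mod t l
      have := Nat.div_add_mod (t + 1) l
      rw [hdiv] at this
      omega
    exact ⟨hdiv ▸ honTime, fun _ m => by rw [hdiv, hmod]; exact hcard m⟩

end IsGreedyStep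

end Step

section Execution

variable {M J : Type*} [DecidableEq M] [Fintype J] {L : ℕ}

/-- A greedy execution up to time `tmax` together with the positions `push t` chosen by its
adversary at each time `t`. -/
structure IsPushedExec (seq : J → List M) (l : ℕ) (h : J → Fin L) (tmax : ℕ)
    (pos : ℕ → J → ℕ) (st : ℕ → J → Fin 2) (push : ℕ → J → ℕ) : Prop where
  pos_le_length : ∀ t ≤ tmax, ∀ j, pos t j ≤ (seq j).length
  st_zero : ∀ j, st 0 j = 0
  step : ∀ t < tmax, IsGreedyStep seq l h pos st push t

variable {seq : J → List M} {l : ℕ} {h : J → Fin L} {tmax : ℕ} {pos : ℕ → J → ℕ}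
  {st : ℕ → J → Fin 2} {push : ℕ → J → ℕ} {t u N : ℕ} {j : J}

lemma IsGreedyExec.exists_isPushedExec [Fintype M] (hexec : IsGreedyExec seq l h tmax pos st) :
    ∃ push, IsPushedExec seq l h tmax pos st push := by
  obtain ⟨hpos, hst, hstep⟩ := hexec
  choose! push hpush work hmem hsome hworked hidle hdrop hkeep using hstep
  exact ⟨push, hpos, hst, fun t ht =>
    { le_push := fun j => (hpush t ht j).1
      exists_work :=
        ⟨work t, fun m j hj => (hmem t ht m j hj).1, hsome t ht, hworked t ht, hidle t ht⟩
      st_succ_of_isDropped := hdrop t ht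
      st_succ_of_not_isDropped := hkeep t ht }⟩

namespace IsPushedExec

lemma onSchedule (hexec : IsPushedExec seq l h tmax pos st push) (ht : t ≤ tmax) :
    OnSchedule seq l h pos st t := by
  induction t with
  | zero => exact ⟨fun _ _ _ => by simp, fun hmod => absurd (Nat.zero_mod l) hmod⟩
  | succ t ih => exact (hexec.step t ht).onSchedule_succ (ih (Nat.le_of_succ_le ht))

lemma pos_eq_length_of_st_eq_zero (hexec : IsPushedExec seq l h (N * l) pos st push)
    (hl : 0 < l) (hN : h j + (seq j).length ≤ N) (hj : st (N * l) j = 0) :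
    pos (N * l) j = (seq j).length := by
  refine (hexec.pos_le_length _ le_rfl j).eq_of_not_lt fun hlt => ?_
  have := (hexec.onSchedule le_rfl).onTime j hj hlt
  rw [Nat.mul_div_cancel _ hl] at this
  omega

lemma exists_isDropped_of_st_ne_zero (hexec : IsPushedExec seq l h tmax pos st push)
    (ht : t ≤ tmax) (hj : st t j ≠ 0) : ∃ u < t, IsDropped seq l h st push u j := by
  induction t with
  | zero => exact absurd (hexec.st_zero j) hj
  | succ t ih =>
    by_cases hdrop : IsDropped seq l h st push t j
    · exact ⟨t, t.lt_succ_self, hdrop⟩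
    · rw [(hexec.step t ht).st_succ_of_not_isDropped j hdrop] at hj
      obtain ⟨u, hu, hdrop'⟩ := ih (Nat.le_of_succ_le ht) hj
      exact ⟨u, hu.trans t.lt_succ_self, hdrop'⟩

lemma not_isDropped_of_st_eq_zero (hexec : IsPushedExec seq l h tmax pos st push)
    (hut : u < t) (ht : t ≤ tmax) (hj : st t j = 0) : ¬ IsDropped seq l h st push u j := by
  induction t, hut using Nat.le_induction with
  | base => exact (hexec.step u ht).not_isDropped_of_st_succ_eq_zero hj
  | succ t _ ih =>
    exact ih (Nat.le_of_succ_le ht) ((hexec.step t ht).st_eq_zero_of_st_succ_eq_zero hj)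

lemma isDropped_time_unique (hexec : IsPushedExec seq l h tmax pos st push)
    (hu : u < tmax) (ht : t < tmax) (hju : IsDropped seq l h st push u j)
    (hjt : IsDropped seq l h st push t j) : u = t := by
  rcases lt_trichotomy u t with hlt | heq | hgt
  · exact absurd hju (hexec.not_isDropped_of_st_eq_zero hlt ht.le hjt.st_eq_zero)
  · exact heq
  · exact absurd hjt (hexec.not_isDropped_of_st_eq_zero hgt hu.le hju.st_eq_zero)

end IsPushedExec

end Execution

section DropPattern

variable {M J : Type*} [DecidableEq M] [Fintype J] {L : ℕ}

/-- The jobs dropped at machine `m` in large step `T`, each paired with its position at that time.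
This is the pattern that a greedy execution exhibits. -/
def dropPattern (seq : J → List M) (l : ℕ) (h : J → Fin L) (st : ℕ → J → Fin 2)
    (push : ℕ → J → ℕ) (T : ℕ) (m : M) : Finset (J × ℕ) :=
  if l < (queue seq h (push (T * l)) (st (T * l)) T m).card then
    (queue seq h (push (T * l)) (st (T * l)) T m).map
      ⟨fun j => (j, push (T * l) j), fun _ _ heq => congrArg Prod.fst heq⟩
  else ∅

variable {seq : J → List M} {l : ℕ} {h : J → Fin L} {pos : ℕ → J → ℕ}
  {st : ℕ → J → Fin 2} {push : ℕ → J → ℕ} {t T T' N : ℕ} {m m' : M} {j : J} {p p' : J × ℕ}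

lemma mem_dropPattern : p ∈ dropPattern seq l h st push T m ↔
    l < (queue seq h (push (T * l)) (st (T * l)) T m).card ∧
      p.1 ∈ queue seq h (push (T * l)) (st (T * l)) T m ∧ push (T * l) p.1 = p.2 := by
  unfold dropPattern
  split_ifs with hlt
  · simp only [mem_map, Prod.ext_iff, hlt, true_and]
    exact ⟨fun ⟨j, hj, hfst, hsnd⟩ => hfst ▸ ⟨hj, hsnd⟩,
      fun ⟨hmem, hpush⟩ => ⟨p.1, hmem, rfl, hpush⟩⟩
  · simp [hlt]

lemma dropPattern_eq_empty_or_lt_card (seq : J → List M) (l : ℕ) (h : J → Fin L)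
    (st : ℕ → J → Fin 2) (push : ℕ → J → ℕ) (T : ℕ) (m : M) :
    dropPattern seq l h st push T m = ∅ ∨ l < (dropPattern seq l h st push T m).card := by
  unfold dropPattern
  split_ifs with hlt
  · exact .inr (by rwa [card_map])
  · exact .inl rfl

lemma getElem?_of_mem_dropPattern (hp : p ∈ dropPattern seq l h st push T m) :
    (seq p.1)[p.2]? = some m := by
  obtain ⟨-, hmem, hpush⟩ := mem_dropPattern.1 hp
  exact hpush ▸ (mem_queue.1 hmem).2.2.1

lemma add_eq_of_mem_dropPattern (hp : p ∈ dropPattern seq l h st push T m) :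
    (h p.1 : ℕ) + p.2 = T := by
  obtain ⟨-, hmem, hpush⟩ := mem_dropPattern.1 hp
  exact hpush ▸ (mem_queue.1 hmem).2.2.2

lemma isDropped_of_mem_dropPattern (hl : 0 < l) (hp : p ∈ dropPattern seq l h st push T m) :
    IsDropped seq l h st push (T * l) p.1 := by
  obtain ⟨hlt, hmem, -⟩ := mem_dropPattern.1 hp
  refine ⟨Nat.mul_mod_left T l, m, ?_⟩
  rw [Nat.mul_div_cancel T hl]
  exact ⟨hlt, hmem⟩

lemma IsDropped.exists_mem_dropPattern (hl : 0 < l) (hj : IsDropped seq l h st push t j)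
    (ht : t < N * l) : ∃ T : Fin N, ∃ m, ∃ i, (j, i) ∈ dropPattern seq l h st push T m := by
  obtain ⟨hmod, m, hlt, hmem⟩ := hj
  obtain ⟨T, rfl⟩ := Nat.dvd_of_mod_eq_zero hmod
  rw [mul_comm l T] at ht hlt hmem
  rw [Nat.mul_div_cancel T hl] at hlt hmem
  exact ⟨⟨T, Nat.lt_of_mul_lt_mul_right ht⟩, m, push (T * l) j,
    mem_dropPattern.2 ⟨hlt, hmem, rfl⟩⟩

lemma card_le_sum_card_dropPattern [Fintype M] (hl : 0 < l) {S : Finset J}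
    (hS : ∀ j ∈ S, ∃ t < N * l, IsDropped seq l h st push t j) :
    S.card ≤ ∑ T : Fin N, ∑ m, (dropPattern seq l h st push T m).card := by
  classical
  have hcover : S ⊆ univ.biUnion fun T : Fin N => univ.biUnion fun m =>
      (dropPattern seq l h st push T m).image Prod.fst := by
    intro j hj
    obtain ⟨t, ht, hdrop⟩ := hS j hj
    obtain ⟨T, m, i, hi⟩ := hdrop.exists_mem_dropPattern hl ht
    simp only [mem_biUnion, mem_univ, true_and, mem_image]
    exact ⟨T, m, (j, i), hi, rfl⟩
  calc S.card
      ≤ ∑ T : Fin N, (univ.biUnion fun m =>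
          (dropPattern seq l h st push T m).image Prod.fst).card :=
        (card_le_card hcover).trans card_biUnion_le
    _ ≤ ∑ T : Fin N, ∑ m, (dropPattern seq l h st push T m).card :=
        sum_le_sum fun _ _ => card_biUnion_le.trans (sum_le_sum fun _ _ => card_image_le)

lemma IsPushedExec.dropPattern_unique (hexec : IsPushedExec seq l h (N * l) pos st push)
    (hl : 0 < l) (hT : T < N) (hT' : T' < N) (hp : p ∈ dropPattern seq l h st push T m)
    (hp' : p' ∈ dropPattern seq l h st push T' m') (hjob : p.1 = p'.1) :
    T = T' ∧ m = m' ∧ p = p' := by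
  have htime : T * l = T' * l := hexec.isDropped_time_unique
    (Nat.mul_lt_mul_of_pos_right hT hl) (Nat.mul_lt_mul_of_pos_right hT' hl)
    (isDropped_of_mem_dropPattern hl hp) (hjob ▸ isDropped_of_mem_dropPattern hl hp')
  obtain rfl : T = T' := Nat.eq_of_mul_eq_mul_right hl htime
  obtain rfl : p = p' := Prod.ext hjob <| by
    rw [← (mem_dropPattern.1 hp).2.2, ← (mem_dropPattern.1 hp').2.2, hjob]
  exact ⟨rfl, Option.some.inj <|
    (getElem?_of_mem_dropPattern hp).symm.trans (getElem?_of_mem_dropPattern hp'), rfl⟩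

lemma IsGoodHash.two_mul_sum_card_dropPattern_le [Fintype M] (hgood : IsGoodHash seq L l h)
    (hl : 0 < l) (hexec : IsPushedExec seq l h (2 * L * l) pos st push) :
    2 * ∑ T : Fin (2 * L), ∑ m, (dropPattern seq l h st push T m).card ≤ Fintype.card J := by
  by_contra! hlarge
  refine hgood (fun T m => dropPattern seq l h st push T m)
    ⟨fun _ _ _ hp => getElem?_of_mem_dropPattern hp, fun T _ T' _ p hp p' hp' hjob => ?_,
      fun T m => dropPattern_eq_empty_or_lt_card seq l h st push T m, hlarge⟩
    fun _ _ _ hp => add_eq_of_mem_dropPattern hp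
  obtain ⟨htime, hrest⟩ := hexec.dropPattern_unique hl T.2 T'.2 hp hp' hjob
  exact ⟨Fin.ext htime, hrest⟩

end DropPattern

theorem good_hash_half_complete_general {M J : Type*} [Fintype M] [DecidableEq M] [Fintype J]
    (seq : J → List M) (L l : ℕ) (hl0 : 0 < l) (h : J → Fin L)
    (hlen : ∀ j, h j + (seq j).length ≤ 2 * L) (hgood : IsGoodHash seq L l h)
    (pos : ℕ → J → ℕ) (st : ℕ → J → Fin 2)
    (hexec : IsGreedyExec seq l h (2 * L * l) pos st) :
    (Fintype.card J : ℝ) / 2 ≤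
      ((univ.filter fun j : J => pos (2 * L * l) j = (seq j).length).card : ℝ) := by
  obtain ⟨push, hpush⟩ := hexec.exists_isPushedExec
  have hdropped : ∀ j ∈ univ.filter fun j => ¬ pos (2 * L * l) j = (seq j).length,
      ∃ t < 2 * L * l, IsDropped seq l h st push t j := by
    intro j hj
    exact hpush.exists_isDropped_of_st_ne_zero le_rfl fun hst =>
      (mem_filter.1 hj).2 (hpush.pos_eq_length_of_st_eq_zero hl0 (hlen j) hst)
  have hincomplete := card_le_sum_card_dropPattern hl0 hdropped
  have hfew := hgood.two_mul_sum_card_dropPattern_le hl0 hpush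
  have hsplit := card_filter_add_card_filter_not (s := (univ : Finset J))
    fun j => pos (2 * L * l) j = (seq j).length
  rw [card_univ] at hsplit
  rw [div_le_iff₀ two_pos]
  norm_cast
  omega

lemma length_le_dilation {M J : Type*} [Fintype J] (seq : J → List M) (j : J) :
    (seq j).length ≤ dilation seq :=
  le_sup (f := fun j => (seq j).length) (mem_univ j)

/-- If `L ≥ D(J)` and `h` is `(L,l)`-good for `J`, then in any greedy weak-scheduler
execution up to time `2·L·l` (with any adversary pushes and any choices of which eligible
jobs the machines work on), at least half of the jobs are complete at time `2·L·l`. -/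
theorem good_hash_half_complete {M J : Type*} [Fintype M] [DecidableEq M] [Fintype J]
    (seq : J → List M) (L l : ℕ) (hL0 : 0 < L) (hl0 : 0 < l)
    (hLD : dilation seq ≤ L) (h : J → Fin L)
    (hgood : IsGoodHash seq L l h)
    (pos : ℕ → J → ℕ) (st : ℕ → J → Fin 2)
    (hexec : IsGreedyExec seq l h (2 * L * l) pos st) :
    (Fintype.card J : ℝ) / 2 ≤
      ((Finset.univ.filter fun j : J =>
          pos (2 * L * l) j = (seq j).length).card : ℝ) := by
  refine good_hash_half_complete_general seq L l hl0 h (fun j => ?_) hgood pos st hexec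
  have := (length_le_dilation seq j).trans hLD
  omega
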